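/- Let Y1 be a Steiner triple system with more than 7 points that is PG(3,2)-2-pointed with respect to some pair of its points and satisfies |Y1| ≡ 7 (mod 8). If k ≥ 4 and Y := Y1 × PG(k−1,2) is the direct product, then (i) |Y| ≡ 1 (mod 8), and (ii) both Y1 and Y are PG(2,2)-paired. -/

import Mathlib

open Finset

noncomputable section
open scoped Classical

/-- `T` is the set of triples of a Steiner triple system on the finite type `α`:
every pair of distinct points lies in exactly one triple. -/
def IsSTS {α : Type*} (T : Finset (Finset α)) : Prop :=
  (∀ t ∈ T, t.card = 3) ∧
    ∀ p q : α, p ≠ q → ∃! t : Finset α, t ∈ T ∧ p ∈ t ∧ q ∈ t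

/-- `T` is the set of triples of a partial Steiner triple system on `α`:
every pair of distinct points lies in at most one triple. -/
def IsPSTS {α : Type*} (T : Finset (Finset α)) : Prop :=
  (∀ t ∈ T, t.card = 3) ∧
    ∀ p q : α, p ≠ q → ∀ t₁ ∈ T, ∀ t₂ ∈ T, p ∈ t₁ → q ∈ t₁ → p ∈ t₂ → q ∈ t₂ → t₁ = t₂

/-- `W` is a (closed) subsystem of the triple system `T`. -/
def IsSub {α : Type*} (T : Finset (Finset α)) (W : Finset α) : Prop :=
  ∀ t ∈ T, 2 ≤ (t ∩ W).card → t ⊆ W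

/-- `g` is an automorphism of the triple system `T`. -/
def IsAut {α : Type*} (T : Finset (Finset α)) (g : Equiv.Perm α) : Prop :=
  ∀ t : Finset α, t ∈ T ↔ t.image g ∈ T

/-- The automorphism group of a triple system, as a subgroup of the permutation group. -/
def autGroup {α : Type*} (T : Finset (Finset α)) : Subgroup (Equiv.Perm α) where
  carrier := {g : Equiv.Perm α | IsAut T g}
  one_mem' := by
    intro t
    simp
  mul_mem' := by
    intro a b ha hb t
    have h1 := hb t
    have h2 := ha (t.image b)
    have key : t.image ⇑(a * b) = (t.image ⇑b).image ⇑a := by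
      rw [Equiv.Perm.coe_mul, Finset.image_image]
    rw [key, ← h2]
    exact h1
  inv_mem' := by
    intro a ha t
    have h := ha (t.image ⇑a⁻¹)
    have key : (t.image ⇑a⁻¹).image ⇑a = t := by
      rw [Finset.image_image]
      have hc : (⇑a ∘ ⇑a⁻¹) = id := by
        funext x
        simp
      rw [hc, Finset.image_id]
    rw [key] at h
    exact h.symm

/-- `φ` embeds the triple system `S` onto a subsystem of `T`: it is injective, maps
triples of `S` to triples of `T`, and the triples of `T` inside the image of `φ` are
precisely the images of the triples of `S`. -/
def IsCopy {α β : Type*} [Fintype α] (S : Finset (Finset α)) (T : Finset (Finset β))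
    (φ : α → β) : Prop :=
  Function.Injective φ ∧ (∀ s ∈ S, s.image φ ∈ T) ∧
    ∀ t ∈ T, t ⊆ Finset.univ.image φ → ∃ s ∈ S, t = s.image φ

/-- The point set `W` is invariant under every automorphism of `T`. -/
def AutInvariant {β : Type*} (T : Finset (Finset β)) (W : Finset β) : Prop :=
  ∀ g : Equiv.Perm β, IsAut T g → W.image g = W

/-- For the copy of `S` inside `T` given by `φ`, restriction gives a group isomorphism
from `Aut T` onto `Aut S`: every automorphism of `T` induces (via `φ`) an automorphism
of `S`, and every automorphism of `S` is induced by exactly one automorphism of `T`. -/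
def AutRestrictIso {α β : Type*} (T : Finset (Finset β)) (S : Finset (Finset α))
    (φ : α → β) : Prop :=
  (∀ g : Equiv.Perm β, IsAut T g →
      ∃ h : Equiv.Perm α, IsAut S h ∧ ∀ x : α, g (φ x) = φ (h x)) ∧
    ∀ h : Equiv.Perm α, IsAut S h →
      ∃! g : Equiv.Perm β, IsAut T g ∧ ∀ x : α, g (φ x) = φ (h x)

/-- `φ` embeds `S` as an `Aut T`-invariant subsystem of `T` on which `Aut T` induces
the full automorphism group of `S`, with `Aut T ≅ Aut S` via restriction. -/
def FullEmbedding {α β : Type*} [Fintype α] (S : Finset (Finset α)) (T : Finset (Finset β))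
    (φ : α → β) : Prop :=
  IsCopy S T φ ∧ AutInvariant T (Finset.univ.image φ) ∧ AutRestrictIso T S φ

/-- The points of the projective space `PG(n,2)`: nonzero vectors of `GF(2)^{n+1}`. -/
abbrev PGPoint (n : ℕ) := {x : Fin (n + 1) → ZMod 2 // x ≠ 0}

/-- The lines of `PG(n,2)`: 3-sets of nonzero vectors summing to `0`. -/
def PGTriples (n : ℕ) : Finset (Finset (PGPoint n)) :=
  Finset.univ.filter fun t : Finset (PGPoint n) =>
    t.card = 3 ∧ ∑ v ∈ t, (v : Fin (n + 1) → ZMod 2) = 0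

/-- The smallest subsystem of `T` containing the point set `P`. -/
def GeneratedSub {α : Type*} [Fintype α] (T : Finset (Finset α)) (P : Finset α) : Finset α :=
  Finset.univ.filter fun x => ∀ W : Finset α, IsSub T W → P ⊆ W → x ∈ W

/-- `W` is a subsystem of `T` isomorphic to `PG(n,2)`. -/
def IsPGSub {α : Type*} [Fintype α] (n : ℕ) (T : Finset (Finset α)) (W : Finset α) : Prop :=
  ∃ φ : PGPoint n → α, IsCopy (PGTriples n) T φ ∧ Finset.univ.image φ = W

/-- A triple system is `PG(2,2)`-paired if any two distinct points lie in at least two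
subsystems isomorphic to `PG(2,2)`. -/
def PG22Paired {α : Type*} [Fintype α] (T : Finset (Finset α)) : Prop :=
  ∀ p q : α, p ≠ q → ∃ W₁ W₂ : Finset α, W₁ ≠ W₂ ∧
    (p ∈ W₁ ∧ q ∈ W₁ ∧ IsPGSub 2 T W₁) ∧ p ∈ W₂ ∧ q ∈ W₂ ∧ IsPGSub 2 T W₂

/-- `T` is `PG(3,2)`-2-pointed with respect to the points `p, q`: any four points
including `p` and `q` generate a subsystem isomorphic to `PG(2,2)` or `PG(3,2)`. -/
def PG32TwoPointed {α : Type*} [Fintype α] (T : Finset (Finset α)) (p q : α) : Prop :=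
  p ≠ q ∧ ∀ s : Finset α, s.card = 4 → p ∈ s → q ∈ s →
    IsPGSub 2 T (GeneratedSub T s) ∨ IsPGSub 3 T (GeneratedSub T s)

/-- The copy of `Y` inside `2Y+1`. -/
def dp0 {γ : Type*} (a : γ) : γ ⊕ γ ⊕ Unit := Sum.inl a

/-- The disjoint copy `Y₁` of `Y` inside `2Y+1`. -/
def dp1 {γ : Type*} (a : γ) : γ ⊕ γ ⊕ Unit := Sum.inr (Sum.inl a)

/-- The extra point `*` of `2Y+1`. -/
def dpStar {γ : Type*} : γ ⊕ γ ⊕ Unit := Sum.inr (Sum.inr ())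

/-- The triples of the Steiner triple system `2Y+1` built from a system `Y` with
triple set `T`. -/
def DoubleTriples {γ : Type*} [Fintype γ] (T : Finset (Finset γ)) :
    Finset (Finset (γ ⊕ γ ⊕ Unit)) :=
  Finset.univ.filter fun t : Finset (γ ⊕ γ ⊕ Unit) =>
    (∃ s ∈ T, t = s.image dp0) ∨
    (∃ a : γ, t = {dpStar, dp0 a, dp1 a}) ∨
    (∃ a b c : γ, ({a, b, c} : Finset γ) ∈ T ∧ t = {dp1 a, dp1 b, dp0 c})

/-- The triples of the direct product of two triple systems. -/
def ProdTriples {α β : Type*} [Fintype α] [Fintype β]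
    (TA : Finset (Finset α)) (TB : Finset (Finset β)) : Finset (Finset (α × β)) :=
  Finset.univ.filter fun t : Finset (α × β) =>
    (∃ a : α, ∃ s ∈ TB, t = s.image fun b => (a, b)) ∨
    (∃ b : β, ∃ s ∈ TA, t = s.image fun a => (a, b)) ∨
    (∃ a₁ a₂ a₃ : α, ∃ b₁ b₂ b₃ : β, ({a₁, a₂, a₃} : Finset α) ∈ TA ∧
      ({b₁, b₂, b₃} : Finset β) ∈ TB ∧ t = {(a₁, b₁), (a₂, b₂), (a₃, b₃)})

/-- The triples of Moore's construction `U = X ∪ (V × A)`.  Here `TX` (on `δ`), `TV`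
(on `α`), `TY` (on `γ`) are the triple sets of `X`, `V`, `Y`; `j : δ → γ` embeds `X`
as a subsystem of `Y` and `ℓ : A → γ` labels `Y − X` by the group `A`. -/
def MooreTriples {δ α γ A : Type*} [Fintype δ] [Fintype α] [Fintype A] [Group A]
    (TX : Finset (Finset δ)) (TV : Finset (Finset α)) (TY : Finset (Finset γ))
    (j : δ → γ) (ℓ : A → γ) : Finset (Finset (δ ⊕ α × A)) :=
  Finset.univ.filter fun t : Finset (δ ⊕ α × A) =>
    (∃ s ∈ TX, t = s.image Sum.inl) ∨
    (∃ v : α, ∃ a₁ a₂ : A, ∃ x : δ, ({ℓ a₁, ℓ a₂, j x} : Finset γ) ∈ TY ∧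
      t = {Sum.inr (v, a₁), Sum.inr (v, a₂), Sum.inl x}) ∨
    (∃ v : α, ∃ a₁ a₂ a₃ : A, ({ℓ a₁, ℓ a₂, ℓ a₃} : Finset γ) ∈ TY ∧
      t = {Sum.inr (v, a₁), Sum.inr (v, a₂), Sum.inr (v, a₃)}) ∨
    (∃ v₁ v₂ v₃ : α, ∃ a₁ a₂ a₃ : A, ({v₁, v₂, v₃} : Finset α) ∈ TV ∧ a₁ * a₂ * a₃ = 1 ∧
      t = {Sum.inr (v₁, a₁), Sum.inr (v₂, a₂), Sum.inr (v₃, a₃)})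

/-- The hypotheses of Moore's construction: `Y` and `V` are Steiner triple systems,
`A` is a cyclic group, `j` embeds `X` as a subsystem of `Y` (with triple set `TX`),
and `ℓ` is a bijective labeling of `Y − X` by `A`. -/
def MooreSetup {δ α γ A : Type*} [Fintype δ] [Group A]
    (TX : Finset (Finset δ)) (TV : Finset (Finset α)) (TY : Finset (Finset γ))
    (j : δ → γ) (ℓ : A → γ) : Prop :=
  IsSTS TY ∧ IsSTS TV ∧ IsCyclic A ∧ Function.Injective j ∧
    IsSub TY (Finset.univ.image j) ∧ IsCopy TX TY j ∧
    Function.Injective ℓ ∧ Set.range ℓ = (Set.range j)ᶜ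

/-- The subsystem `Y_v = X ∪ (v × A)` of Moore's construction. -/
def MooreY {δ α A : Type*} [Fintype δ] [Fintype A] (v : α) : Finset (δ ⊕ α × A) :=
  (Finset.univ.image (Sum.inl : δ → δ ⊕ α × A)) ∪
    Finset.univ.image fun a : A => (Sum.inr (v, a) : δ ⊕ α × A)

/-- A subsystem of type (3.1) of Moore's construction, where `ε` denotes the unique
involution `−1` of `A`: the seven points `x, (v_i, a_i), (v_i, −a_i)` for a triple
`{v₁,v₂,v₃}` of `V`, with `a₁a₂a₃ = 1` and `{a_i, −a_i, x}` a triple of `Y`. -/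
def MooreType31 {δ α γ A : Type*} [Group A] (TV : Finset (Finset α))
    (TY : Finset (Finset γ)) (j : δ → γ) (ℓ : A → γ) (ε : A)
    (W : Finset (δ ⊕ α × A)) : Prop :=
  ∃ v₁ v₂ v₃ : α, ∃ a₁ a₂ a₃ : A, ∃ x : δ,
    ({v₁, v₂, v₃} : Finset α) ∈ TV ∧ a₁ * a₂ * a₃ = 1 ∧
    ({ℓ a₁, ℓ (ε * a₁), j x} : Finset γ) ∈ TY ∧
    ({ℓ a₂, ℓ (ε * a₂), j x} : Finset γ) ∈ TY ∧
    ({ℓ a₃, ℓ (ε * a₃), j x} : Finset γ) ∈ TY ∧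
    W = {Sum.inl x, Sum.inr (v₁, a₁), Sum.inr (v₁, ε * a₁), Sum.inr (v₂, a₂),
         Sum.inr (v₂, ε * a₂), Sum.inr (v₃, a₃), Sum.inr (v₃, ε * a₃)}

/-- The point set of a family of triples. -/
def ptsOf {β : Type*} (T : Finset (Finset β)) : Finset β := T.sup id

/-- Adjacency of triples: two distinct triples of `T` meeting in a point. -/
def TriAdj {β : Type*} (T : Finset (Finset β)) (t s : Finset β) : Prop :=
  t ∈ T ∧ s ∈ T ∧ t ≠ s ∧ (t ∩ s).Nonempty

/-- A partial Steiner triple system is cyclic if the graph whose vertices are its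
triples, two joined when they meet, is a cycle (equivalently: it has at least three
triples, every triple meets exactly two others, and the graph is connected). -/
def IsCyclicPSTS {β : Type*} (T : Finset (Finset β)) : Prop :=
  3 ≤ T.card ∧ (∀ t ∈ T, (T.filter fun s => s ≠ t ∧ (s ∩ t).Nonempty).card = 2) ∧
    ∀ t ∈ T, ∀ s ∈ T, Relation.ReflTransGen (TriAdj T) t s

/-- The partial Steiner triple system `Q(z)` (for the parameter `n`), with triple set
`T`, point set `P` and distinguished point `z`: two cyclic PSTSs `C₁, C₂` on
`2n+4` and `2n+6` points meeting exactly in the point `z`, which lies in two triples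
of each, triples `{z, z'_i, z_i}` of `C_i` with `z'_i` in two triples of `C_i`, and a
new point `z'` in the single additional triple `{z'_1, z', z'_2}`. -/
def IsQ {β : Type*} (n : ℕ) (T : Finset (Finset β)) (P : Finset β) (z : β) : Prop :=
  ∃ C₁ C₂ : Finset (Finset β), ∃ z' z₁' z₂' z₁ z₂ : β,
    IsPSTS T ∧ IsCyclicPSTS C₁ ∧ IsCyclicPSTS C₂ ∧
    (ptsOf C₁).card = 2 * n + 4 ∧ (ptsOf C₂).card = 2 * n + 6 ∧
    ptsOf C₁ ∩ ptsOf C₂ = {z} ∧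
    (C₁.filter fun t => z ∈ t).card = 2 ∧ (C₂.filter fun t => z ∈ t).card = 2 ∧
    ({z, z₁', z₁} : Finset β) ∈ C₁ ∧ (C₁.filter fun t => z₁' ∈ t).card = 2 ∧
    ({z, z₂', z₂} : Finset β) ∈ C₂ ∧ (C₂.filter fun t => z₂' ∈ t).card = 2 ∧
    z' ∉ ptsOf C₁ ∪ ptsOf C₂ ∧
    T = C₁ ∪ C₂ ∪ {({z₁', z', z₂'} : Finset β)} ∧
    P = ptsOf C₁ ∪ ptsOf C₂ ∪ {z'}

/-- Nonempty subsets of `β`: the points of the projective space `P` over `GF(2)`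
built on a point set `β`. -/
abbrev NESet (β : Type*) := {s : Finset β // s.Nonempty}

/-- The triples of the projective space over `GF(2)` on the nonempty subsets of `β`:
3-sets of subsets with empty symmetric difference. -/
def sdTriples (β : Type*) [Fintype β] : Finset (Finset (NESet β)) :=
  Finset.univ.filter fun t : Finset (NESet β) =>
    ∃ a b c : NESet β, a ≠ b ∧ a ≠ c ∧ b ≠ c ∧ t = {a, b, c} ∧
      symmDiff (symmDiff a.1 b.1) c.1 = ∅

/-- The singleton `{a}` as a point of the projective space. -/
def sEl {β : Type*} (a : β) : NESet β := ⟨{a}, Finset.singleton_nonempty a⟩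

/-- The pair `{a,b}` as a point of the projective space. -/
def pEl {β : Type*} (a b : β) : NESet β := ⟨{a, b}, Finset.insert_nonempty a {b}⟩

/-- The triples of `P` removed in Cameron's construction, for each triple `{a,b,c}`
of `V'`. -/
def removedTriples {β : Type*} [Fintype β] (TV' : Finset (Finset β)) :
    Finset (Finset (NESet β)) :=
  Finset.univ.filter fun t : Finset (NESet β) =>
    ∃ a b c : β, ({a, b, c} : Finset β) ∈ TV' ∧
      (t = {pEl a b, pEl a c, pEl b c} ∨ t = {sEl a, sEl b, pEl a b} ∨
       t = {sEl a, sEl c, pEl a c} ∨ t = {sEl b, sEl c, pEl b c})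

/-- The new triples of Cameron's construction, for each triple `{a,b,c}` of `V'`. -/
def addedTriples {β : Type*} [Fintype β] (TV' : Finset (Finset β)) :
    Finset (Finset (NESet β)) :=
  Finset.univ.filter fun t : Finset (NESet β) =>
    ∃ a b c : β, ({a, b, c} : Finset β) ∈ TV' ∧
      (t = {sEl a, sEl b, sEl c} ∨ t = {sEl a, pEl a b, pEl a c} ∨
       t = {sEl b, pEl a b, pEl b c} ∨ t = {sEl c, pEl a c, pEl b c})

/-- The Steiner triple system `U` of Cameron's construction obtained from the
projective space `P` and the partial system `V'`. -/
def CameronSTS {β : Type*} [Fintype β] (TV' : Finset (Finset β)) :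
    Finset (Finset (NESet β)) :=
  (sdTriples β \ removedTriples TV') ∪ addedTriples TV'

/-!
The direct product of two Steiner triple systems is the product of the corresponding Steiner
quasigroups. Hence, given a plane `W` of `A` through `a, a'` and a plane `V` of `B` through `b, b'`,
the graph of an isomorphism `W ≅ V` taking `a` to `b` and `a'` to `b'` is a plane of `A × B`; such
an isomorphism exists because `GL(3, 2)` is 2-transitive on the points of `PG(2,2)`. Therefore
direct products of `PG(2,2)`-paired systems are `PG(2,2)`-paired, and `PG(n,2)` is so for `n ≥ 3`.

In a system that is `PG(3,2)`-2-pointed with respect to `p, q`, any two points `x, y` lie in a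
`PG(3,2)`: together with `p, q` they generate a `PG(3,2)` or a plane `W`. In the latter case pick
`u ∈ W` off the line `pq`, and `z ∉ W`. A proper subsystem of a system has less than half of its
points, so the subsystem generated by `p, q, u, z`, which meets `W` in at least 4 points, contains
`W`; it then has more than 14 points, so that it is a `PG(3,2)`.
-/

/-- `SteinerMul T a b c` says that `a * b = c` in the Steiner quasigroup of `T`, in which
`a * a = a` and `a * b` is the third point of the triple through `a ≠ b`. It is a relation rather
than an operation, so that it makes sense for every family `T` of finite sets. -/
def SteinerMul {α : Type*} (T : Finset (Finset α)) (a b c : α) : Prop :=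
  a = b ∧ b = c ∨ ({a, b, c} : Finset α) ∈ T

section SteinerQuasigroup

variable {α β γ : Type*} {S : Finset (Finset α)} {T : Finset (Finset β)} {U : Finset (Finset γ)}

theorem steinerMul_self (a : α) : SteinerMul S a a a :=
  Or.inl ⟨rfl, rfl⟩

theorem SteinerMul.triple_mem {a b c : α} (h : SteinerMul S a b c) (hab : a ≠ b) :
    ({a, b, c} : Finset α) ∈ S :=
  h.resolve_left fun e => hab e.1

theorem SteinerMul.eq_of_self (hS : ∀ s ∈ S, #s = 3) {a c : α} (h : SteinerMul S a a c) :
    a = c :=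
  h.elim And.right fun h => absurd rfl (card_triple_eq_three_iff.1 (hS _ h)).1

section IsCopy

variable [Fintype α]

theorem IsCopy.steinerMul_iff {φ : α → β} (hφ : IsCopy S T φ) (x y z : α) :
    SteinerMul T (φ x) (φ y) (φ z) ↔ SteinerMul S x y z := by
  have himage : ({x, y, z} : Finset α).image φ = {φ x, φ y, φ z} := by
    simp only [image_insert, image_singleton]
  refine or_congr (by rw [hφ.1.eq_iff, hφ.1.eq_iff]) ⟨fun h => ?_, fun h => himage ▸ hφ.2.1 _ h⟩
  obtain ⟨s, hs, hst⟩ := hφ.2.2 _ h (himage ▸ image_subset_image (subset_univ _))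
  rwa [image_injective hφ.1 (himage.trans hst)]

theorem isCopy_of_steinerMul_iff (hS : ∀ s ∈ S, #s = 3) (hT : ∀ t ∈ T, #t = 3) {φ : α → β}
    (h : ∀ x y z, SteinerMul T (φ x) (φ y) (φ z) ↔ SteinerMul S x y z) : IsCopy S T φ := by
  have hφ : Function.Injective φ := fun x y hxy =>
    ((h x x y).1 (hxy ▸ steinerMul_self _)).eq_of_self hS
  refine ⟨hφ, fun s hs => ?_, fun t ht hsub => ?_⟩
  · obtain ⟨x, y, z, hxy, -, -, rfl⟩ := card_eq_three.1 (hS s hs)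
    simpa only [image_insert, image_singleton] using
      ((h x y z).2 (Or.inr hs)).triple_mem (hφ.ne hxy)
  · obtain ⟨a, b, c, hab, -, -, rfl⟩ := card_eq_three.1 (hT t ht)
    simp only [insert_subset_iff, singleton_subset_iff, mem_image, mem_univ, true_and] at hsub
    obtain ⟨⟨x, rfl⟩, ⟨y, rfl⟩, ⟨z, rfl⟩⟩ := hsub
    exact ⟨_, ((h x y z).1 (Or.inr ht)).triple_mem (ne_of_apply_ne φ hab),
      by simp only [image_insert, image_singleton]⟩

theorem IsCopy.comp [Fintype β] {ψ : β → γ} {φ : α → β} (hψ : IsCopy T U ψ) (hφ : IsCopy S T φ) :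
    IsCopy S U (ψ ∘ φ) := by
  refine ⟨hψ.1.comp hφ.1, fun s hs => ?_, fun u hu hsub => ?_⟩
  · rw [← image_image]
    exact hψ.2.1 _ (hφ.2.1 s hs)
  · rw [← image_image] at hsub
    obtain ⟨t, ht, rfl⟩ := hψ.2.2 u hu (hsub.trans (image_subset_image (subset_univ _)))
    obtain ⟨s, hs, rfl⟩ := hφ.2.2 t ht ((image_subset_image_iff hψ.1).1 hsub)
    exact ⟨s, hs, image_image⟩

end IsCopy

end SteinerQuasigroup

section Subsystem

variable {α : Type*} {T : Finset (Finset α)}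

theorem IsSTS.exists_triple_mem (hT : IsSTS T) {a b : α} (hab : a ≠ b) :
    ∃ c, ({a, b, c} : Finset α) ∈ T := by
  obtain ⟨t, ⟨ht, ha, hb⟩, -⟩ := hT.2 a b hab
  obtain ⟨c, hc⟩ : ∃ c, t \ {a, b} = {c} := by
    rw [← card_eq_one, card_sdiff_of_subset (by simp [insert_subset_iff, ha, hb]), hT.1 t ht,
      card_pair hab]
  refine ⟨c, ?_⟩
  rwa [show ({a, b, c} : Finset α) = t by grind]

theorem IsSub.mem_of_triple_mem {W : Finset α} (hW : IsSub T W) {a b c : α}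
    (h : ({a, b, c} : Finset α) ∈ T) (hab : a ≠ b) (ha : a ∈ W) (hb : b ∈ W) : c ∈ W :=
  hW _ h (one_lt_card.2 ⟨a, by simp [ha], b, by simp [hb], hab⟩) (by simp)

theorem IsSub.inter {V W : Finset α} (hV : IsSub T V) (hW : IsSub T W) : IsSub T (V ∩ W) :=
  fun t ht h => subset_inter
    (hV t ht (h.trans (card_le_card (inter_subset_inter_left inter_subset_left))))
    (hW t ht (h.trans (card_le_card (inter_subset_inter_left inter_subset_right))))

theorem IsSTS.two_mul_card_lt_of_ssubset (hT : IsSTS T) {V W : Finset α} (hV : IsSub T V)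
    (hW : IsSub T W) (hVW : V ⊂ W) : 2 * #V < #W := by
  -- Joining a point `x` of `W` outside `V` to the points of `V` yields `#V` further points of `W`.
  obtain ⟨x, hxW, hxV⟩ := exists_of_ssubset hVW
  have hne (v : V) : x ≠ v := fun e => hxV (e ▸ v.2)
  choose f hf using fun v : V => hT.exists_triple_mem (hne v)
  have hf_ne (v : V) := card_triple_eq_three_iff.1 (hT.1 _ (hf v))
  have hf_mem (v : V) : f v ∈ W :=
    hW.mem_of_triple_mem (hf v) (hne v) hxW (hVW.subset v.2)
  have hf_notMem (v : V) : f v ∉ V := fun h =>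
    hxV (hV.mem_of_triple_mem (by convert hf v using 1; grind) (hf_ne v).2.2 v.2 h)
  have hf_inj : Function.Injective f := by
    intro v w hvw
    have htriple := (hT.2 x (f v) (hf_ne v).2.1).unique
      ⟨hf v, by simp, by simp⟩ ⟨hf w, by simp, by simp [hvw]⟩
    have hv : (v : α) ∈ ({x, (w : α), f w} : Finset α) := htriple ▸ by simp
    have := hne v
    have := (hf_ne v).2.2
    grind
  have hdisj : Disjoint V (univ.image f) :=
    disjoint_right.2 (forall_mem_image.2 fun v _ => hf_notMem v)
  calc 2 * #V = #(V ∪ univ.image f) := by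
        rw [card_union_of_disjoint hdisj, card_image_of_injective _ hf_inj, card_univ,
          Fintype.card_coe, two_mul]
    _ < #W := by
        refine card_lt_card (ssubset_iff_of_subset (union_subset hVW.subset ?_) |>.2 ⟨x, hxW, ?_⟩)
        · simpa [image_subset_iff] using hf_mem
        · simpa [hxV] using fun v hv => (hf_ne ⟨v, hv⟩).2.1.symm

theorem IsSTS.subset_of_triple_mem_of_notMem (hT : IsSTS T) {V W : Finset α} (hV : IsSub T V)
    (hW : IsSub T W) (hcard : #W ≤ 8) {a b c u : α} (ht : {a, b, c} ∈ T) (ha : a ∈ V ∩ W)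
    (hb : b ∈ V ∩ W) (hu : u ∈ V ∩ W) (hu_notMem : u ∉ ({a, b, c} : Finset α)) : W ⊆ V := by
  have hVW := hV.inter hW
  have hc : c ∈ V ∩ W :=
    hVW.mem_of_triple_mem ht (card_triple_eq_three_iff.1 (hT.1 _ ht)).1 ha hb
  have hfour : 4 ≤ #(V ∩ W) := by
    have hsub : insert u {a, b, c} ⊆ V ∩ W := by
      simp only [insert_subset_iff, singleton_subset_iff]
      exact ⟨hu, ha, hb, hc⟩
    simpa only [card_insert_of_notMem hu_notMem, hT.1 _ ht] using card_le_card hsub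
  by_contra hWV
  have hlt := hT.two_mul_card_lt_of_ssubset hVW hW
    (inter_subset_right.ssubset_of_ne (mt inter_eq_right.1 hWV))
  omega

theorem subset_generatedSub [Fintype α] (T : Finset (Finset α)) (P : Finset α) :
    P ⊆ GeneratedSub T P := fun _ hx =>
  mem_filter.2 ⟨mem_univ _, fun _ _ hPW => hPW hx⟩

theorem isSub_generatedSub [Fintype α] (T : Finset (Finset α)) (P : Finset α) :
    IsSub T (GeneratedSub T P) := by
  refine fun t ht h x hx => mem_filter.2 ⟨mem_univ _, fun W hW hPW => hW t ht (h.trans ?_) hx⟩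
  exact card_le_card (inter_subset_inter_left fun y hy => (mem_filter.1 hy).2 W hW hPW)

end Subsystem

section ProjectiveSpace

variable {m n : ℕ}

theorem card_PGPoint (n : ℕ) : Fintype.card (PGPoint n) = 2 ^ (n + 1) - 1 := by
  rw [Fintype.card_subtype_compl]
  simp

theorem card_PGPoint_mod_eight (hn : 2 ≤ n) : Fintype.card (PGPoint n) % 8 = 7 := by
  obtain ⟨m, rfl⟩ := Nat.exists_eq_add_of_le' hn
  rw [card_PGPoint, add_assoc, pow_add]
  have := Nat.two_pow_pos m
  omega

theorem card_of_mem_PGTriples : ∀ t ∈ PGTriples n, #t = 3 := fun _ ht =>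
  (mem_filter.1 ht).2.1

theorem steinerMul_PGTriples_iff {x y z : PGPoint n} :
    SteinerMul (PGTriples n) x y z ↔ x = y ∧ y = z ∨ x ≠ y ∧ x.1 + y.1 = z.1 := by
  suffices h : ({x, y, z} : Finset (PGPoint n)) ∈ PGTriples n ↔ x ≠ y ∧ x.1 + y.1 = z.1 from
    or_congr_right (by convert h)
  rw [PGTriples, mem_filter_univ, card_triple_eq_three_iff]
  have hsum (hxy : x ≠ y) (hxz : x ≠ z) (hyz : y ≠ z) :
      ∑ v ∈ {x, y, z}, v.1 = 0 ↔ x.1 + y.1 = z.1 := by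
    rw [sum_insert (by simp [hxy, hxz]), sum_pair hyz, ← add_assoc, CharTwo.add_eq_zero]
  constructor
  · rintro ⟨⟨hxy, hxz, hyz⟩, h⟩
    exact ⟨hxy, (hsum hxy hxz hyz).1 h⟩
  · rintro ⟨hxy, h⟩
    have hxz : x ≠ z := fun e => y.2 (by simpa [e] using h)
    have hyz : y ≠ z := fun e => x.2 (by simpa [e] using h)
    exact ⟨⟨hxy, hxz, hyz⟩, (hsum hxy hxz hyz).2 h⟩

/-- The map of projective spaces induced by an injective linear map. -/
def pgMap (F : (Fin (m + 1) → ZMod 2) →ₗ[ZMod 2] (Fin (n + 1) → ZMod 2))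
    (hF : Function.Injective F) (x : PGPoint m) : PGPoint n :=
  ⟨F x.1, (map_ne_zero_iff F hF).2 x.2⟩

theorem isCopy_pgMap (F : (Fin (m + 1) → ZMod 2) →ₗ[ZMod 2] (Fin (n + 1) → ZMod 2))
    (hF : Function.Injective F) : IsCopy (PGTriples m) (PGTriples n) (pgMap F hF) := by
  refine isCopy_of_steinerMul_iff card_of_mem_PGTriples card_of_mem_PGTriples fun x y z => ?_
  simp only [steinerMul_PGTriples_iff, pgMap, ne_eq, Subtype.ext_iff, ← map_add, hF.eq_iff]

theorem isPGSub_span {v : Fin (m + 1) → Fin (n + 1) → ZMod 2} (hv : LinearIndependent (ZMod 2) v) :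
    IsPGSub m (PGTriples n) {x | x.1 ∈ Submodule.span (ZMod 2) (Set.range v)} := by
  refine ⟨_, isCopy_pgMap (Fintype.linearCombination (ZMod 2) v)
    hv.fintypeLinearCombination_injective, ?_⟩
  ext x
  simp only [mem_image, mem_univ, true_and, mem_filter, ← Fintype.range_linearCombination,
    LinearMap.mem_range, pgMap, Subtype.ext_iff]
  refine ⟨fun ⟨w, hw⟩ => ⟨w, hw⟩, fun ⟨w, hw⟩ => ⟨⟨w, ?_⟩, hw⟩⟩
  rintro rfl
  exact x.2 (by simpa using hw.symm)

open Projectivization in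
theorem projectivization_mk_eq_mk_iff {V : Type*} [AddCommGroup V] [Module (ZMod 2) V] {x y : V}
    (hx : x ≠ 0) (hy : y ≠ 0) : mk (ZMod 2) x hx = mk (ZMod 2) y hy ↔ x = y := by
  simp [mk_eq_mk_iff, Unique.exists_iff, Subsingleton.elim default (1 : (ZMod 2)ˣ), eq_comm]

open Projectivization in
theorem linearIndependent_pair_of_ne {x y : PGPoint n} (h : x ≠ y) :
    LinearIndependent (ZMod 2) ![x.1, y.1] := by
  rw [← independent_mk_iff_LinearIndependent x.2 y.2, independent_pair_iff_ne, ne_eq,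
    projectivization_mk_eq_mk_iff]
  exact Subtype.coe_ne_coe.2 h

open Projectivization in
theorem exists_isCopy_PGTriples_apply_eq {x y x' y' : PGPoint n} (h : x ≠ y) (h' : x' ≠ y') :
    ∃ g, IsCopy (PGTriples n) (PGTriples n) g ∧ g x = x' ∧ g y = y' := by
  have mk_ne {u v : PGPoint n} (huv : u ≠ v) : mk (ZMod 2) u.1 u.2 ≠ mk (ZMod 2) v.1 v.2 :=
    mt (projectivization_mk_eq_mk_iff u.2 v.2).1 (Subtype.coe_ne_coe.2 huv)
  obtain ⟨F, hx, hy⟩ := MulAction.is_two_pretransitive_iff.1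
    (linearEquiv_is_two_pretransitive (ZMod 2) (Fin (n + 1) → ZMod 2)) (mk_ne h) (mk_ne h')
  rw [smul_mk, projectivization_mk_eq_mk_iff] at hx hy
  exact ⟨_, isCopy_pgMap F.toLinearMap F.injective, Subtype.ext hx, Subtype.ext hy⟩

end ProjectiveSpace

section Plane

variable {α β : Type*} [Fintype α] [Fintype β] {S : Finset (Finset α)} {T : Finset (Finset β)}

theorem IsPGSub.image {n : ℕ} {W : Finset α} (hW : IsPGSub n S W) {φ : α → β}
    (hφ : IsCopy S T φ) : IsPGSub n T (W.image φ) := by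
  obtain ⟨χ, hχ, rfl⟩ := hW
  exact ⟨φ ∘ χ, hφ.comp hχ, image_image.symm⟩

theorem IsPGSub.card {n : ℕ} {W : Finset α} (hW : IsPGSub n S W) : #W = 2 ^ (n + 1) - 1 := by
  obtain ⟨χ, hχ, rfl⟩ := hW
  rw [card_image_of_injective _ hχ.1, card_univ, card_PGPoint]

/-- The points `p` and `q` lie in at least two subsystems of `T` isomorphic to `PG(2,2)`; this is
the condition that `PG22Paired T` imposes on distinct `p` and `q`. -/
def LieInTwoPlanes (T : Finset (Finset α)) (p q : α) : Prop :=
  ∃ W₁ W₂ : Finset α, W₁ ≠ W₂ ∧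
    (p ∈ W₁ ∧ q ∈ W₁ ∧ IsPGSub 2 T W₁) ∧ p ∈ W₂ ∧ q ∈ W₂ ∧ IsPGSub 2 T W₂

theorem LieInTwoPlanes.map {φ : α → β} (hφ : IsCopy S T φ) {p q : α} (h : LieInTwoPlanes S p q) :
    LieInTwoPlanes T (φ p) (φ q) := by
  obtain ⟨W₁, W₂, hne, ⟨hp₁, hq₁, hW₁⟩, hp₂, hq₂, hW₂⟩ := h
  exact ⟨W₁.image φ, W₂.image φ, (image_injective hφ.1).ne hne,
    ⟨mem_image_of_mem φ hp₁, mem_image_of_mem φ hq₁, hW₁.image hφ⟩,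
    mem_image_of_mem φ hp₂, mem_image_of_mem φ hq₂, hW₂.image hφ⟩

theorem pg22Paired_PGTriples {n : ℕ} (hn : 3 ≤ n) : PG22Paired (PGTriples n) := by
  intro x y hxy
  have hfinrank : Module.finrank (ZMod 2) (Fin (n + 1) → ZMod 2) = n + 1 := by simp
  have hli := linearIndependent_pair_of_ne hxy
  obtain ⟨z, hz : LinearIndependent (ZMod 2) ![z, x.1, y.1]⟩ :=
    exists_linearIndependent_cons_of_lt_finrank hli (by omega)
  obtain ⟨w, hw⟩ := exists_linearIndependent_cons_of_lt_finrank hz (by omega)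
  obtain ⟨-, hw_notMem⟩ := linearIndependent_finCons.1 hw
  have hrange : Set.range ![x.1, y.1] ⊆ Set.range ![z, x.1, y.1] := by
    rw [Matrix.range_cons z]
    exact Set.subset_union_right
  have hw' : LinearIndependent (ZMod 2) ![w, x.1, y.1] :=
    hli.finCons fun h => hw_notMem (Submodule.span_mono hrange h)
  have mem_span {v : Fin 3 → Fin (n + 1) → ZMod 2} (i : Fin 3) :
      v i ∈ Submodule.span (ZMod 2) (Set.range v) := Submodule.subset_span (Set.mem_range_self i)
  refine ⟨_, _, fun heq => hw_notMem ?_, ⟨?_, ?_, isPGSub_span hz⟩, ?_, ?_, isPGSub_span hw'⟩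
  · have hw_mem : (⟨w, hw'.ne_zero 0⟩ : PGPoint n) ∈
        ({p | p.1 ∈ Submodule.span (ZMod 2) (Set.range ![w, x.1, y.1])} : Finset (PGPoint n)) :=
      (mem_filter_univ _).2 (mem_span 0)
    rw [← heq] at hw_mem
    simpa only [mem_filter_univ] using hw_mem
  · exact (mem_filter_univ _).2 (mem_span 1)
  · exact (mem_filter_univ _).2 (mem_span 2)
  · exact (mem_filter_univ _).2 (mem_span 1)
  · exact (mem_filter_univ _).2 (mem_span 2)

end Plane

section DirectProduct

variable {α β γ : Type*} [Fintype α] [Fintype β] [Fintype γ] {S : Finset (Finset γ)}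
  {TA : Finset (Finset α)} {TB : Finset (Finset β)}

theorem steinerMul_prodTriples_iff {P Q R : α × β} :
    SteinerMul (ProdTriples TA TB) P Q R ↔
      SteinerMul TA P.1 Q.1 R.1 ∧ SteinerMul TB P.2 Q.2 R.2 := by
  constructor
  · rintro (⟨rfl, rfl⟩ | h)
    · exact ⟨steinerMul_self _, steinerMul_self _⟩
    -- `h` holds for the classical decidable equality of `α × β`, not for that of a product type.
    have h_mem : ({P, Q, R} : Finset (α × β)) ∈ ProdTriples TA TB := by convert h
    have h_fst : ({P, Q, R} : Finset (α × β)).image Prod.fst = {P.1, Q.1, R.1} := by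
      simp only [image_insert, image_singleton]
    have h_snd : ({P, Q, R} : Finset (α × β)).image Prod.snd = {P.2, Q.2, R.2} := by
      simp only [image_insert, image_singleton]
    rcases (mem_filter.1 h_mem).2 with ⟨a, s, hs, e⟩ | ⟨b, s, hs, e⟩ |
      ⟨a₁, a₂, a₃, b₁, b₂, b₃, hA, hB, e⟩
    · have h_eq : ∀ X ∈ ({P, Q, R} : Finset (α × β)), X.1 = a := by simp [e]
      rw [e, image_image, Function.comp_def, image_id'] at h_snd
      exact ⟨Or.inl ⟨by simp [h_eq], by simp [h_eq]⟩, Or.inr (h_snd ▸ hs)⟩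
    · have h_eq : ∀ X ∈ ({P, Q, R} : Finset (α × β)), X.2 = b := by simp [e]
      rw [e, image_image, Function.comp_def, image_id'] at h_fst
      exact ⟨Or.inr (h_fst ▸ hs), Or.inl ⟨by simp [h_eq], by simp [h_eq]⟩⟩
    · rw [e, image_insert, image_insert, image_singleton] at h_fst h_snd
      exact ⟨Or.inr (h_fst ▸ hA), Or.inr (h_snd ▸ hB)⟩
  · obtain ⟨a₁, b₁⟩ := P
    obtain ⟨a₂, b₂⟩ := Q
    obtain ⟨a₃, b₃⟩ := R
    rintro ⟨⟨rfl, rfl⟩ | hA, ⟨rfl, rfl⟩ | hB⟩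
    · exact steinerMul_self _
    · exact Or.inr (mem_filter.2 ⟨mem_univ _, Or.inl ⟨a₁, _, hB, by ext; simp⟩⟩)
    · exact Or.inr (mem_filter.2 ⟨mem_univ _, Or.inr (Or.inl ⟨b₁, _, hA, by ext; simp⟩)⟩)
    · exact Or.inr (mem_filter.2
        ⟨mem_univ _, Or.inr (Or.inr ⟨_, _, _, _, _, _, hA, hB, by ext; simp⟩)⟩)

theorem card_of_mem_prodTriples (hA : ∀ t ∈ TA, #t = 3) (hB : ∀ t ∈ TB, #t = 3) :
    ∀ t ∈ ProdTriples TA TB, #t = 3 := by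
  intro t ht
  rcases (mem_filter.1 ht).2 with ⟨a, s, hs, rfl⟩ | ⟨b, s, hs, rfl⟩ |
    ⟨a₁, a₂, a₃, b₁, b₂, b₃, ha, -, rfl⟩
  · rw [card_image_of_injective _ (Prod.mk_right_injective a), hB s hs]
  · rw [card_image_of_injective _ (Prod.mk_left_injective b), hA s hs]
  · obtain ⟨h₁₂, h₁₃, h₂₃⟩ := card_triple_eq_three_iff.1 (hA _ ha)
    rw [card_eq_three]
    exact ⟨_, _, _, by simp [h₁₂], by simp [h₁₃], by simp [h₂₃], rfl⟩

theorem isCopy_prodMk_left (hA : ∀ t ∈ TA, #t = 3) (hB : ∀ t ∈ TB, #t = 3) (a : α) :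
    IsCopy TB (ProdTriples TA TB) fun b => (a, b) :=
  isCopy_of_steinerMul_iff hB (card_of_mem_prodTriples hA hB) fun _ _ _ =>
    steinerMul_prodTriples_iff.trans (and_iff_right (steinerMul_self a))

theorem isCopy_prodMk_right (hA : ∀ t ∈ TA, #t = 3) (hB : ∀ t ∈ TB, #t = 3) (b : β) :
    IsCopy TA (ProdTriples TA TB) fun a => (a, b) :=
  isCopy_of_steinerMul_iff hA (card_of_mem_prodTriples hA hB) fun _ _ _ =>
    steinerMul_prodTriples_iff.trans (and_iff_left (steinerMul_self b))

theorem IsCopy.prodMk (hA : ∀ t ∈ TA, #t = 3) (hB : ∀ t ∈ TB, #t = 3) (hS : ∀ s ∈ S, #s = 3)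
    {φ : γ → α} {ψ : γ → β} (hφ : IsCopy S TA φ) (hψ : IsCopy S TB ψ) :
    IsCopy S (ProdTriples TA TB) fun x => (φ x, ψ x) :=
  isCopy_of_steinerMul_iff hS (card_of_mem_prodTriples hA hB) fun x y z => by
    rw [steinerMul_prodTriples_iff, hφ.steinerMul_iff, hψ.steinerMul_iff, and_self]

theorem IsPGSub.exists_isPGSub_prodTriples (hA : ∀ t ∈ TA, #t = 3) (hB : ∀ t ∈ TB, #t = 3) {n : ℕ}
    {W : Finset α} {V : Finset β} (hW : IsPGSub n TA W) (hV : IsPGSub n TB V) {a a' : α}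
    (haW : a ∈ W) (haW' : a' ∈ W) (ha : a ≠ a') {b b' : β} (hbV : b ∈ V) (hbV' : b' ∈ V)
    (hb : b ≠ b') :
    ∃ U, IsPGSub n (ProdTriples TA TB) U ∧ (a, b) ∈ U ∧ (a', b') ∈ U ∧ U.image Prod.fst = W := by
  obtain ⟨φ, hφ, rfl⟩ := hW
  obtain ⟨ψ, hψ, rfl⟩ := hV
  obtain ⟨x, -, rfl⟩ := mem_image.1 haW
  obtain ⟨x', -, rfl⟩ := mem_image.1 haW'
  obtain ⟨y, -, rfl⟩ := mem_image.1 hbV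
  obtain ⟨y', -, rfl⟩ := mem_image.1 hbV'
  obtain ⟨g, hg, rfl, rfl⟩ := exists_isCopy_PGTriples_apply_eq (ne_of_apply_ne φ ha)
    (ne_of_apply_ne ψ hb)
  exact ⟨univ.image fun x => (φ x, ψ (g x)),
    ⟨_, hφ.prodMk hA hB card_of_mem_PGTriples (hψ.comp hg), by ext; simp⟩,
    mem_image_of_mem _ (mem_univ x), mem_image_of_mem _ (mem_univ x'), image_image⟩

theorem PG22Paired.prodTriples (hA : ∀ t ∈ TA, #t = 3) (hB : ∀ t ∈ TB, #t = 3)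
    (hpA : PG22Paired TA) (hpB : PG22Paired TB) : PG22Paired (ProdTriples TA TB) := by
  rintro ⟨a, b⟩ ⟨a', b'⟩ hne
  obtain rfl | ha := eq_or_ne a a'
  · exact LieInTwoPlanes.map (isCopy_prodMk_left hA hB a) (hpB b b' fun e => hne (e ▸ rfl))
  obtain rfl | hb := eq_or_ne b b'
  · exact LieInTwoPlanes.map (isCopy_prodMk_right hA hB b) (hpA a a' ha)
  obtain ⟨V, -, -, ⟨hb₁, hb₁', hV⟩, -⟩ := hpB b b' hb
  obtain ⟨W₁, W₂, hW, ⟨ha₁, ha₁', hW₁⟩, ha₂, ha₂', hW₂⟩ := hpA a a' ha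
  obtain ⟨U₁, hU₁, hmem₁, hmem₁', rfl⟩ :=
    hW₁.exists_isPGSub_prodTriples hA hB hV ha₁ ha₁' ha hb₁ hb₁' hb
  obtain ⟨U₂, hU₂, hmem₂, hmem₂', rfl⟩ :=
    hW₂.exists_isPGSub_prodTriples hA hB hV ha₂ ha₂' ha hb₁ hb₁' hb
  exact ⟨U₁, U₂, ne_of_apply_ne _ hW, ⟨hmem₁, hmem₁', hU₁⟩, hmem₂, hmem₂', hU₂⟩

end DirectProduct

section TwoPointed

variable {α : Type*} [Fintype α] {T : Finset (Finset α)} {p q : α}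

theorem PG32TwoPointed.exists_isPGSub_superset (hT : IsSTS T) (h7 : 7 < Fintype.card α)
    (h : PG32TwoPointed T p q) {W : Finset α} (hW : IsSub T W) (hcard : #W = 7) (hp : p ∈ W)
    (hq : q ∈ W) : ∃ X, IsPGSub 3 T X ∧ W ⊆ X := by
  obtain ⟨z, -, hz⟩ := exists_mem_notMem_of_card_lt_card (hcard.trans_lt h7)
  obtain ⟨c, hc⟩ := hT.exists_triple_mem h.1
  obtain ⟨u, huW, hu⟩ := exists_mem_notMem_of_card_lt_card
    (show #{p, q, c} < #W by rw [hT.1 _ hc]; omega)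
  have hs : #{p, q, u, z} = 4 := by
    simp only [mem_insert, mem_singleton, not_or] at hu
    have hz_ne {x : α} (hx : x ∈ W) : x ≠ z := ne_of_mem_of_not_mem hx hz
    exact card_eq_four.2 ⟨p, q, u, z, h.1, Ne.symm hu.1, hz_ne hp, Ne.symm hu.2.1, hz_ne hq,
      hz_ne huW, rfl⟩
  have hX := isSub_generatedSub T {p, q, u, z}
  have hmem := subset_generatedSub T {p, q, u, z}
  set X := GeneratedSub T {p, q, u, z}
  simp only [insert_subset_iff, singleton_subset_iff] at hmem
  obtain ⟨hpX, hqX, huX, hzX⟩ := hmem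
  have hWX : W ⊆ X := hT.subset_of_triple_mem_of_notMem hX hW (by omega) hc (mem_inter.2 ⟨hpX, hp⟩)
    (mem_inter.2 ⟨hqX, hq⟩) (mem_inter.2 ⟨huX, huW⟩) hu
  have hlt : 2 * #W < #X :=
    hT.two_mul_card_lt_of_ssubset hW hX (ssubset_iff_of_subset hWX |>.2 ⟨z, hzX, hz⟩)
  refine ⟨X, (h.2 _ hs (by simp) (by simp)).resolve_left fun hplane => ?_, hWX⟩
  have hX_card : #X = 7 := hplane.card
  omega

theorem PG32TwoPointed.exists_isPGSub (hT : IsSTS T) (h7 : 7 < Fintype.card α)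
    (h : PG32TwoPointed T p q) (x y : α) : ∃ W, IsPGSub 3 T W ∧ x ∈ W ∧ y ∈ W := by
  obtain ⟨s, hsub, hs⟩ := exists_superset_card_eq (card_le_four (a := p) (b := q) (c := x) (d := y))
    (by omega)
  simp only [insert_subset_iff, singleton_subset_iff] at hsub
  obtain ⟨hp, hq, hx, hy⟩ := hsub
  have hgen := subset_generatedSub T s
  rcases h.2 s hs hp hq with hW | hW
  · obtain ⟨X, hX, hWX⟩ :=
      h.exists_isPGSub_superset hT h7 (isSub_generatedSub T s) hW.card (hgen hp) (hgen hq)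
    exact ⟨X, hX, hWX (hgen hx), hWX (hgen hy)⟩
  · exact ⟨_, hW, hgen hx, hgen hy⟩

theorem PG32TwoPointed.pg22Paired (hT : IsSTS T) (h7 : 7 < Fintype.card α)
    (h : PG32TwoPointed T p q) : PG22Paired T := by
  intro x y hxy
  obtain ⟨W, ⟨φ, hφ, rfl⟩, hx, hy⟩ := h.exists_isPGSub hT h7 x y
  obtain ⟨x, -, rfl⟩ := mem_image.1 hx
  obtain ⟨y, -, rfl⟩ := mem_image.1 hy
  exact LieInTwoPlanes.map hφ (pg22Paired_PGTriples le_rfl x y (ne_of_apply_ne φ hxy))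

end TwoPointed

/-- **Lemma 2.3.** Let `Y₁` be a `PG(3,2)`-2-pointed Steiner triple system with more
than 7 points and `|Y₁| ≡ 7 (mod 8)`.  If `k ≥ 4` and `Y := Y₁ × PG(k−1,2)`, then
(i) `|Y| ≡ 1 (mod 8)`, and (ii) `Y₁` and `Y` are both `PG(2,2)`-paired. -/
theorem stmt6 {γ : Type*} [Fintype γ] (T₁ : Finset (Finset γ)) (hT : IsSTS T₁)
    (h7 : 7 < Fintype.card γ) (hmod : Fintype.card γ % 8 = 7)
    (hpt : ∃ p q : γ, PG32TwoPointed T₁ p q) (k : ℕ) (hk : 4 ≤ k) :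
    Fintype.card (γ × PGPoint (k - 1)) % 8 = 1 ∧
    PG22Paired T₁ ∧ PG22Paired (ProdTriples T₁ (PGTriples (k - 1))) := by
  obtain ⟨p, q, h⟩ := hpt
  have hpaired : PG22Paired T₁ := h.pg22Paired hT h7
  refine ⟨?_, hpaired, ?_⟩
  · rw [Fintype.card_prod, Nat.mul_mod, hmod, card_PGPoint_mod_eight (by omega)]
  · exact hpaired.prodTriples hT.1 card_of_mem_PGTriples (pg22Paired_PGTriples (by omega))

end
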